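/- Let d ≥ 1 and let R be a reduced crystallographic root system spanning ℝ^d, with Weyl group W(R) ⊆ O(d) and determinant character ε. Let W(R) act on ℝ^{d+1} = ℝ^d ⊕ ℝ by w·(v, x) = (w(v), ε(w)·x), giving an embedding W(R) ⊆ O(d+1) and hence an action on polynomials in d+1 variables. Then in ℤ⟦t⟧ one has ∑_{n≥0} dim( H_n(ℝ^{d+1})^{W(R)} ) tⁿ = (1 + t^{1 + |R|/2})·P_R(t), where P_R(t) = ∑_{n≥0} dim( Pol_n(ℝ^d)^{W(R)} ) tⁿ, harmonic polynomials on ℝ^{d+1} are taken with respect to the standard Laplacian in d+1 variables, and |R| is the number of roots. -/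

import Mathlib

open MvPolynomial

noncomputable section

/-- The action of an (invertible) matrix `g` on polynomial functions on `ℝ^ι`, given by
`(g · P)(x) = P (g⁻¹ x)`; concretely, substitute `X i ↦ ∑ j (g⁻¹) i j • X j`. -/
def matrixAct {ι : Type} [Fintype ι] [DecidableEq ι] (g : Matrix ι ι ℝ) :
    MvPolynomial ι ℝ →ₗ[ℝ] MvPolynomial ι ℝ :=
  (aeval (R := ℝ) fun i => ∑ j, C (g⁻¹ i j) * X j).toLinearMap

/-- The standard Laplace operator `Δ = ∑ i ∂²/∂x_i²` on polynomials. -/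
def laplacian {ι : Type} [Fintype ι] [DecidableEq ι] :
    MvPolynomial ι ℝ →ₗ[ℝ] MvPolynomial ι ℝ :=
  ∑ i, (pderiv i).toLinearMap ∘ₗ (pderiv i).toLinearMap

/-- `Pol_n(ℝ^ι)^Γ`: the `Γ`-invariant homogeneous polynomials of degree `n`. -/
def polInv {ι : Type} [Fintype ι] [DecidableEq ι] (Γ : Set (Matrix ι ι ℝ)) (n : ℕ) :
    Submodule ℝ (MvPolynomial ι ℝ) :=
  homogeneousSubmodule ι ℝ n ⊓ ⨅ g ∈ Γ, LinearMap.eqLocus (matrixAct g) LinearMap.id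

/-- `H_n(ℝ^ι)^Γ`: the `Γ`-invariant harmonic homogeneous polynomials of degree `n`. -/
def harmInv {ι : Type} [Fintype ι] [DecidableEq ι] (Γ : Set (Matrix ι ι ℝ)) (n : ℕ) :
    Submodule ℝ (MvPolynomial ι ℝ) :=
  homogeneousSubmodule ι ℝ n ⊓ LinearMap.ker laplacian ⊓
    ⨅ g ∈ Γ, LinearMap.eqLocus (matrixAct g) LinearMap.id

/-- The standard Euclidean inner product on `ℝ^d`. -/
def dotP {d : ℕ} (x y : Fin d → ℝ) : ℝ := ∑ i, x i * y i

/-- The orthogonal reflection `s_α` in the hyperplane orthogonal to `α`. -/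
def rootReflection {d : ℕ} (α x : Fin d → ℝ) : Fin d → ℝ :=
  x - (2 * dotP x α / dotP α α) • α

/-- The Weyl group `W(R)`: the subgroup generated by the reflections `s_α`, `α ∈ R`. -/
def weylGroup {d : ℕ} (R : Finset (Fin d → ℝ)) : Subgroup (Matrix (Fin d) (Fin d) ℝ)ˣ :=
  Subgroup.closure
    {g | ∃ α ∈ R, ∀ x : Fin d → ℝ, (↑g : Matrix (Fin d) (Fin d) ℝ).mulVec x = rootReflection α x}

/-- `W(R)`, as a set of matrices. -/
def weylSet {d : ℕ} (R : Finset (Fin d → ℝ)) : Set (Matrix (Fin d) (Fin d) ℝ) :=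
  {m | ∃ g ∈ weylGroup R, m = (↑g : Matrix (Fin d) (Fin d) ℝ)}

/-- The extension of `g ∈ O(d)` to `ℝ^{d+1} = ℝ^d ⊕ ℝ` acting by `g` on `ℝ^d` and by
`det g` (the determinant character) on the extra coordinate. -/
def extMatrix {d : ℕ} (g : Matrix (Fin d) (Fin d) ℝ) :
    Matrix (Fin d ⊕ Unit) (Fin d ⊕ Unit) ℝ :=
  Matrix.fromBlocks g 0 0 (Matrix.of fun _ _ => g.det)

/-- The image of `W(R)` in `O(d+1)` under `w ↦ (w, ε(w))`, as a set of matrices. -/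
def extWeylSet {d : ℕ} (R : Finset (Fin d → ℝ)) :
    Set (Matrix (Fin d ⊕ Unit) (Fin d ⊕ Unit) ℝ) :=
  {m | ∃ g ∈ weylGroup R, m = extMatrix (↑g : Matrix (Fin d) (Fin d) ℝ)}

/-!
A harmonic polynomial on `ℝ^d ⊕ ℝ` is determined by its Cauchy data on the hyperplane `ℝ^d`, its
restriction and the restriction of its normal derivative, and every pair of homogeneous polynomials
of degrees `n + 1` and `n` is the Cauchy data of a harmonic one. By uniqueness, invariance under
`w ↦ (w, det w)` can be read off the data: the restriction must be `W`-invariant and the normal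
derivative must transform by `det`. A polynomial of the latter kind changes sign under every
reflection `s_α`, hence vanishes on every root hyperplane, so it is an invariant polynomial times
the product of the positive roots. That product has degree `|R| / 2`, and passing to the normal
derivative lowers the degree by one, which explains the factor `1 + t ^ (1 + |R| / 2)`.
-/

section PolynomialCalculus

variable {σ τ R : Type*}

lemma pderiv_bind₁ [CommSemiring R] [Fintype σ] (f : σ → MvPolynomial τ R)
    (P : MvPolynomial σ R) (i : τ) :
    pderiv i (bind₁ f P) = ∑ k, pderiv i (f k) * bind₁ f (pderiv k P) := by
  classical
  induction P using MvPolynomial.induction_on with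
  | C a => simp
  | add p q hp hq => simp only [map_add, hp, hq, mul_add, Finset.sum_add_distrib]
  | mul_X p j hp =>
    have bind₁_pderiv_X (k : σ) :
        bind₁ f (pderiv k (X j : MvPolynomial σ R)) = if j = k then 1 else 0 := by
      rw [pderiv_X, Pi.single_apply, apply_ite (bind₁ f), map_one, map_zero]
    simp only [map_mul, pderiv_mul, map_add, hp, bind₁_X_right, bind₁_pderiv_X, mul_add,
      Finset.sum_add_distrib, Finset.sum_mul, mul_ite, mul_one, mul_zero, Finset.sum_ite_eq,
      Finset.mem_univ, if_true, mul_assoc]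
    rw [mul_comm (pderiv i (f j))]

lemma pderiv_comm [CommSemiring R] (i j : σ) (P : MvPolynomial σ R) :
    pderiv i (pderiv j P) = pderiv j (pderiv i P) := by
  obtain rfl | hij := eq_or_ne i j
  · rfl
  · ext m
    simp only [coeff_pderiv, Finsupp.add_apply, Finsupp.single_eq_of_ne hij,
      Finsupp.single_eq_of_ne hij.symm, add_zero, mul_right_comm,
      add_right_comm m (Finsupp.single i 1)]

lemma pderiv_eq_zero_of_isHomogeneous_zero [CommSemiring R] {P : MvPolynomial σ R}
    (hP : P.IsHomogeneous 0) (i : σ) : pderiv i P = 0 := by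
  rw [← totalDegree_zero_iff_isHomogeneous, totalDegree_eq_zero_iff_eq_C] at hP
  rw [hP, pderiv_C]

lemma notMem_vars_of_pderiv_eq_zero [CommSemiring R] [NoZeroDivisors R] [CharZero R] {i : σ}
    {P : MvPolynomial σ R} (h : pderiv i P = 0) : i ∉ P.vars := by
  rw [mem_vars_iff_mem_support]
  rintro ⟨m, hm, hi⟩
  have coeff_eq_zero := congrArg (coeff (m - Finsupp.single i 1)) h
  rw [coeff_pderiv, Finsupp.sub_add_single_one_cancel (Finsupp.mem_support_iff.1 hi),
    coeff_zero] at coeff_eq_zero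
  exact mul_ne_zero (mem_support_iff.1 hm) (Nat.cast_add_one_ne_zero _) coeff_eq_zero

lemma exists_pderiv_X_mul_eq [Field R] [CharZero R] (i : σ) {Q : MvPolynomial σ R} {n : ℕ}
    (hQ : Q.IsHomogeneous n) :
    ∃ S : MvPolynomial σ R, S.IsHomogeneous n ∧ pderiv i (X i * S) = Q := by
  refine ⟨∑ m ∈ Q.support, monomial m (coeff m Q / (m i + 1)), ?_, ?_⟩
  · exact IsHomogeneous.sum _ _ _ fun m hm =>
      isHomogeneous_monomial _ (hQ.degree_eq_sum_deg_support hm).symm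
  · have pderiv_summand (m : σ →₀ ℕ) :
        pderiv i (X i * monomial m (coeff m Q / (m i + 1))) = monomial m (coeff m Q) := by
      have : (m i + 1 : R) ≠ 0 := Nat.cast_add_one_ne_zero _
      rw [mul_comm, ← pow_one (X i), ← monomial_add_single, pderiv_monomial,
        add_tsub_cancel_right, Finsupp.add_apply, Finsupp.single_eq_same, Nat.cast_add_one,
        div_mul_cancel₀ _ this]
    rw [Finset.mul_sum, map_sum, Finset.sum_congr rfl fun m _ => pderiv_summand m,
      support_sum_monomial_coeff]

lemma isHomogeneous_of_mul_left [CommRing R] [IsDomain R] {D Q : MvPolynomial σ R} {k m : ℕ}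
    (hD : D.IsHomogeneous k) (hD0 : D ≠ 0) (hDQ : (D * Q).IsHomogeneous (k + m)) :
    Q.IsHomogeneous m := by
  let _ := MvPolynomial.gradedAlgebra (σ := σ) (R := R)
  have decompose_mul := DirectSum.decompose_of_mem_same (homogeneousSubmodule σ R) hDQ
  rw [DirectSum.coe_decompose_mul_of_left_mem_of_le (homogeneousSubmodule σ R) hD
      (Nat.le_add_right k m),
    Nat.add_sub_cancel_left] at decompose_mul
  rw [← mul_left_cancel₀ hD0 decompose_mul]
  exact (mem_homogeneousSubmodule _ _).1 (Subtype.prop _)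

lemma eq_zero_of_dvd_of_isHomogeneous_of_lt [CommRing R] [IsDomain R] {D P : MvPolynomial σ R}
    {k n : ℕ} (hD : D.IsHomogeneous k) (hP : P.IsHomogeneous n) (hdvd : D ∣ P) (hlt : n < k) :
    P = 0 := by
  by_contra hP0
  have := totalDegree_le_of_dvd_of_isDomain hdvd hP0
  rw [hD.totalDegree (ne_zero_of_dvd_ne_zero hP0 hdvd), hP.totalDegree hP0] at this
  omega

lemma dvd_algHom_apply_sub [CommRing R] {φ : MvPolynomial σ R →ₐ[R] MvPolynomial σ R}
    {D : MvPolynomial σ R} (h : ∀ i, D ∣ φ (X i) - X i) (P : MvPolynomial σ R) :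
    D ∣ φ P - P := by
  let π := Ideal.Quotient.mkₐ R (Ideal.span {D})
  have π_comp : π.comp φ = π := MvPolynomial.algHom_ext fun i => by
    simpa [π, Ideal.Quotient.eq, Ideal.mem_span_singleton] using h i
  simpa [π, Ideal.Quotient.eq, Ideal.mem_span_singleton] using DFunLike.congr_fun π_comp P

end PolynomialCalculus

section LinearSubstitution

variable {ι : Type} [Fintype ι] [DecidableEq ι]

lemma pderiv_toMvPolynomial {m n R : Type*} [CommSemiring R] [Fintype n] (M : Matrix m n R)
    (k : m) (i : n) : pderiv i (M.toMvPolynomial k) = C (M k i) := by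
  classical
  simp [Matrix.toMvPolynomial, ← C_mul_X_eq_monomial, pderiv_X, Pi.single_apply]

lemma matrixAct_apply (g : Matrix ι ι ℝ) (P : MvPolynomial ι ℝ) :
    matrixAct g P = bind₁ (g⁻¹).toMvPolynomial P := by
  have : (fun i => ∑ j, C (g⁻¹ i j) * X j) = (g⁻¹).toMvPolynomial := by
    simp only [funext_iff, Matrix.toMvPolynomial, C_mul_X_eq_monomial, implies_true]
  rw [matrixAct, this]
  rfl

lemma matrixAct_mul (g h : Matrix ι ι ℝ) :
    matrixAct (g * h) = matrixAct g * matrixAct h := by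
  refine LinearMap.ext fun P => ?_
  simp only [Module.End.mul_apply, matrixAct_apply, bind₁_bind₁, Matrix.mul_inv_rev,
    ← Matrix.toMvPolynomial_mul]

lemma matrixAct_apply_mul (g : Matrix ι ι ℝ) (P Q : MvPolynomial ι ℝ) :
    matrixAct g (P * Q) = matrixAct g P * matrixAct g Q :=
  map_mul (aeval (R := ℝ) _) P Q

lemma matrixAct_one : matrixAct (1 : Matrix ι ι ℝ) = 1 := by
  refine LinearMap.ext fun P => ?_
  rw [matrixAct_apply, inv_one, Matrix.toMvPolynomial_one, bind₁_X_left]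
  rfl

lemma isHomogeneous_matrixAct (g : Matrix ι ι ℝ) {P : MvPolynomial ι ℝ} {n : ℕ}
    (hP : P.IsHomogeneous n) : (matrixAct g P).IsHomogeneous n := by
  rw [matrixAct_apply, ← one_mul n]
  exact hP.aeval _ (Matrix.toMvPolynomial_isHomogeneous _)

lemma laplacian_apply (P : MvPolynomial ι ℝ) : laplacian P = ∑ i, pderiv i (pderiv i P) := by
  simp [laplacian]

lemma isHomogeneous_laplacian {P : MvPolynomial ι ℝ} {n : ℕ} (hP : P.IsHomogeneous n) :
    (laplacian P).IsHomogeneous (n - 2) := by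
  rw [laplacian_apply]
  exact IsHomogeneous.sum _ _ _ fun i _ => hP.pderiv.pderiv

lemma laplacian_eq_zero_of_isHomogeneous {P : MvPolynomial ι ℝ} {n : ℕ}
    (hP : P.IsHomogeneous n) (hn : n < 2) : laplacian P = 0 := by
  rw [laplacian_apply]
  refine Finset.sum_eq_zero fun i _ => pderiv_eq_zero_of_isHomogeneous_zero ?_ i
  simpa [show n - 1 = 0 by omega] using hP.pderiv (i := i)

lemma laplacian_pderiv_comm (i : ι) (P : MvPolynomial ι ℝ) :
    laplacian (pderiv i P) = pderiv i (laplacian P) := by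
  simp only [laplacian_apply, map_sum, pderiv_comm i]

lemma laplacian_bind₁_of_mem_orthogonalGroup {M : Matrix ι ι ℝ}
    (hM : M ∈ Matrix.orthogonalGroup ι ℝ) (P : MvPolynomial ι ℝ) :
    laplacian (bind₁ M.toMvPolynomial P) = bind₁ M.toMvPolynomial (laplacian P) := by
  have rows_orthonormal (k l : ι) : ∑ i, M k i * M l i = if k = l then 1 else 0 := by
    rw [← Matrix.one_apply, ← (Matrix.mem_orthogonalGroup_iff _ _).1 hM, Matrix.mul_apply]
    rfl
  calc laplacian (bind₁ M.toMvPolynomial P)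
      = ∑ k, ∑ l, C (∑ i, M k i * M l i) * bind₁ M.toMvPolynomial (pderiv l (pderiv k P)) := by
        simp only [laplacian_apply, pderiv_bind₁, pderiv_toMvPolynomial, map_sum, pderiv_C_mul,
          Finset.mul_sum, Finset.sum_mul, C_mul, mul_assoc]
        rw [Finset.sum_comm]
        exact Finset.sum_congr rfl fun k _ => Finset.sum_comm
    _ = bind₁ M.toMvPolynomial (laplacian P) := by
        simp [rows_orthonormal, laplacian_apply, apply_ite C]

lemma inv_mem_orthogonalGroup {g : Matrix ι ι ℝ} (hg : g ∈ Matrix.orthogonalGroup ι ℝ) :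
    g⁻¹ ∈ Matrix.orthogonalGroup ι ℝ := by
  rw [Matrix.inv_eq_right_inv ((Matrix.mem_orthogonalGroup_iff _ _).1 hg)]
  exact Unitary.star_mem hg

lemma laplacian_matrixAct {g : Matrix ι ι ℝ} (hg : g ∈ Matrix.orthogonalGroup ι ℝ)
    (P : MvPolynomial ι ℝ) : laplacian (matrixAct g P) = matrixAct g (laplacian P) := by
  simp only [matrixAct_apply, laplacian_bind₁_of_mem_orthogonalGroup (inv_mem_orthogonalGroup hg)]

end LinearSubstitution

section CauchyProblem

variable {σ R : Type*}

/-- Restriction of a polynomial function to the hyperplane where the last variable vanishes. -/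
def restrictHyperplane [CommSemiring R] : MvPolynomial (σ ⊕ Unit) R →ₐ[R] MvPolynomial σ R :=
  aeval (Sum.elim X 0)

/-- The Cauchy data of a polynomial function on the hyperplane where the last variable vanishes:
its restriction and the restriction of its normal derivative. -/
def cauchyData [CommSemiring R] :
    MvPolynomial (σ ⊕ Unit) R →ₗ[R] MvPolynomial σ R × MvPolynomial σ R :=
  restrictHyperplane.toLinearMap.prod
    (restrictHyperplane.toLinearMap ∘ₗ (pderiv (Sum.inr ())).toLinearMap)

lemma cauchyData_apply [CommSemiring R] (P : MvPolynomial (σ ⊕ Unit) R) :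
    cauchyData P = (restrictHyperplane P, restrictHyperplane (pderiv (Sum.inr ()) P)) :=
  rfl

lemma restrictHyperplane_rename [CommSemiring R] (f : MvPolynomial σ R) :
    restrictHyperplane (rename Sum.inl f) = f := by
  rw [restrictHyperplane, aeval_rename, Sum.elim_comp_inl, aeval_X_left_apply]

lemma restrictHyperplane_X_inr_mul [CommSemiring R] (P : MvPolynomial (σ ⊕ Unit) R) :
    restrictHyperplane (X (Sum.inr ()) * P) = 0 := by
  simp [restrictHyperplane]

lemma isHomogeneous_restrictHyperplane [CommSemiring R] {P : MvPolynomial (σ ⊕ Unit) R} {n : ℕ}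
    (hP : P.IsHomogeneous n) : (restrictHyperplane P).IsHomogeneous n := by
  rw [← one_mul n]
  refine hP.aeval _ fun i => ?_
  cases i with
  | inl i => exact isHomogeneous_X R i
  | inr => exact isHomogeneous_zero σ R 1

lemma restrictHyperplane_pderiv_inl [CommRing R] (i : σ) (P : MvPolynomial (σ ⊕ Unit) R) :
    restrictHyperplane (pderiv (Sum.inl i) P) = pderiv i (restrictHyperplane P) := by
  have C_comp_zero : C ∘ (0 : Unit → R) = (0 : Unit → MvPolynomial σ R) := by
    ext1; simp
  simpa only [restrictHyperplane, C_comp_zero] using aeval_sumElim_pderiv_inl P (0 : Unit → R) i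

lemma pderiv_inr_rename_inl [CommSemiring R] (f : MvPolynomial σ R) :
    pderiv (Sum.inr ()) (rename (Sum.inl : σ → σ ⊕ Unit) f) = 0 := by
  classical
  refine pderiv_eq_zero_of_notMem_vars fun h => ?_
  simpa using Finset.mem_of_subset (vars_rename _ f) h

lemma eq_zero_of_pderiv_inr_eq_zero [CommSemiring R] [NoZeroDivisors R] [CharZero R]
    {P : MvPolynomial (σ ⊕ Unit) R} (hderiv : pderiv (Sum.inr ()) P = 0)
    (hrestr : restrictHyperplane P = 0) : P = 0 := by
  have vars_subset : (P.vars : Set (σ ⊕ Unit)) ⊆ Set.range Sum.inl := by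
    rintro (i | u) hi
    · exact Set.mem_range_self i
    · exact absurd hi (notMem_vars_of_pderiv_eq_zero hderiv)
  obtain ⟨f, rfl⟩ := exists_rename_eq_of_vars_subset_range P _ Sum.inl_injective vars_subset
  rw [restrictHyperplane_rename] at hrestr
  rw [hrestr, map_zero]

lemma exists_pderiv_inr_eq [Field R] [CharZero R] {Q : MvPolynomial (σ ⊕ Unit) R}
    {f : MvPolynomial σ R} {n : ℕ} (hQ : Q.IsHomogeneous n) (hf : f.IsHomogeneous (n + 1)) :
    ∃ P : MvPolynomial (σ ⊕ Unit) R, P.IsHomogeneous (n + 1) ∧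
      pderiv (Sum.inr ()) P = Q ∧ restrictHyperplane P = f := by
  obtain ⟨S, hS, hSQ⟩ := exists_pderiv_X_mul_eq (Sum.inr ()) hQ
  refine ⟨X (Sum.inr ()) * S + rename Sum.inl f, ?_, ?_, ?_⟩
  · rw [add_comm n]
    exact ((isHomogeneous_X R _).mul hS).add (add_comm n 1 ▸ hf.rename_isHomogeneous)
  · rw [map_add, hSQ, pderiv_inr_rename_inl, add_zero]
  · rw [map_add, restrictHyperplane_X_inr_mul, restrictHyperplane_rename, zero_add]

end CauchyProblem

section HarmonicExtension

variable {σ : Type} [Fintype σ] [DecidableEq σ]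

lemma restrictHyperplane_laplacian (P : MvPolynomial (σ ⊕ Unit) ℝ) :
    restrictHyperplane (laplacian P) = laplacian (restrictHyperplane P) +
      restrictHyperplane (pderiv (Sum.inr ()) (pderiv (Sum.inr ()) P)) := by
  simp only [laplacian_apply, Fintype.sum_sum_type, Finset.univ_unique, Finset.sum_singleton,
    map_add, map_sum, restrictHyperplane_pderiv_inl, PUnit.default_eq_unit]

lemma eq_zero_of_cauchyData_eq_zero {n : ℕ} {P : MvPolynomial (σ ⊕ Unit) ℝ}
    (hP : P.IsHomogeneous n) (hΔ : laplacian P = 0) (hdata : cauchyData P = 0) : P = 0 := by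
  induction n generalizing P with
  | zero =>
    exact eq_zero_of_pderiv_inr_eq_zero (pderiv_eq_zero_of_isHomogeneous_zero hP _)
      (congrArg Prod.fst hdata)
  | succ n ih =>
    obtain ⟨restrict_P, restrict_deriv⟩ := Prod.mk_eq_zero.1 hdata
    have laplacian_deriv : laplacian (pderiv (Sum.inr ()) P) = 0 := by
      rw [laplacian_pderiv_comm, hΔ, map_zero]
    have restrict_deriv₂ :
        restrictHyperplane (pderiv (Sum.inr ()) (pderiv (Sum.inr ()) P)) = 0 := by
      have := restrictHyperplane_laplacian P
      rwa [hΔ, show restrictHyperplane P = 0 from restrict_P, map_zero, map_zero, zero_add,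
        eq_comm] at this
    exact eq_zero_of_pderiv_inr_eq_zero
      (ih hP.pderiv laplacian_deriv (Prod.ext restrict_deriv restrict_deriv₂)) restrict_P

lemma exists_harmonic_of_cauchyData {n : ℕ} {f h : MvPolynomial σ ℝ}
    (hf : f.IsHomogeneous (n + 1)) (hh : h.IsHomogeneous n) :
    ∃ P : MvPolynomial (σ ⊕ Unit) ℝ, P.IsHomogeneous (n + 1) ∧ laplacian P = 0 ∧
      cauchyData P = (f, h) := by
  induction n generalizing f h with
  | zero =>
    obtain ⟨P, hP, deriv_P, restrict_P⟩ :=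
      exists_pderiv_inr_eq (Q := rename Sum.inl h) hh.rename_isHomogeneous hf
    refine ⟨P, hP, laplacian_eq_zero_of_isHomogeneous hP one_lt_two, ?_⟩
    rw [cauchyData_apply, restrict_P, deriv_P, restrictHyperplane_rename]
  | succ n ih =>
    -- The normal derivative of the solution is the harmonic polynomial with data `(h, -Δf)`.
    obtain ⟨Q, hQ, laplacian_Q, data_Q⟩ := ih hh (isHomogeneous_laplacian hf).neg
    rw [cauchyData_apply, Prod.mk.injEq] at data_Q
    obtain ⟨P, hP, deriv_P, restrict_P⟩ := exists_pderiv_inr_eq hQ hf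
    refine ⟨P, hP, eq_zero_of_pderiv_inr_eq_zero ?_ ?_, ?_⟩
    · rw [← laplacian_pderiv_comm, deriv_P, laplacian_Q]
    · rw [restrictHyperplane_laplacian, restrict_P, deriv_P, data_Q.2, add_neg_cancel]
    · rw [cauchyData_apply, restrict_P, deriv_P, data_Q.1]

end HarmonicExtension

section ExtendedAction

variable {d : ℕ}

lemma isUnit_det_of_mem_orthogonalGroup {ι : Type*} [Fintype ι] [DecidableEq ι]
    {g : Matrix ι ι ℝ} (hg : g ∈ Matrix.orthogonalGroup ι ℝ) : IsUnit g.det :=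
  Matrix.UnitaryGroup.det_isUnit ⟨g, hg⟩

lemma extMatrix_mul (g h : Matrix (Fin d) (Fin d) ℝ) :
    extMatrix g * extMatrix h = extMatrix (g * h) := by
  rw [extMatrix, extMatrix, extMatrix, Matrix.fromBlocks_multiply, Matrix.det_mul]
  congr 1 <;> ext <;> simp [Matrix.mul_apply]

lemma extMatrix_one : extMatrix (1 : Matrix (Fin d) (Fin d) ℝ) = 1 := by
  rw [extMatrix, Matrix.det_one, ← Matrix.fromBlocks_one]
  congr 1

lemma extMatrix_transpose (g : Matrix (Fin d) (Fin d) ℝ) :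
    (extMatrix g).transpose = extMatrix g.transpose := by
  rw [extMatrix, extMatrix, Matrix.fromBlocks_transpose, Matrix.det_transpose]
  rfl

lemma extMatrix_inv {g : Matrix (Fin d) (Fin d) ℝ} (hg : IsUnit g.det) :
    (extMatrix g)⁻¹ = extMatrix g⁻¹ :=
  Matrix.inv_eq_right_inv (by rw [extMatrix_mul, Matrix.mul_nonsing_inv _ hg, extMatrix_one])

lemma extMatrix_mem_orthogonalGroup {g : Matrix (Fin d) (Fin d) ℝ}
    (hg : g ∈ Matrix.orthogonalGroup (Fin d) ℝ) :
    extMatrix g ∈ Matrix.orthogonalGroup (Fin d ⊕ Unit) ℝ := by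
  rw [Matrix.mem_orthogonalGroup_iff] at hg ⊢
  rw [extMatrix_transpose, extMatrix_mul, hg, extMatrix_one]

lemma extMatrix_toMvPolynomial_inl (g : Matrix (Fin d) (Fin d) ℝ) (i : Fin d) :
    (extMatrix g).toMvPolynomial (Sum.inl i) = rename Sum.inl (g.toMvPolynomial i) := by
  simp [Matrix.toMvPolynomial, extMatrix, rename_monomial]

lemma extMatrix_toMvPolynomial_inr (g : Matrix (Fin d) (Fin d) ℝ) :
    (extMatrix g).toMvPolynomial (Sum.inr ()) = X (Sum.inr ()) * C g.det := by
  simp [Matrix.toMvPolynomial, extMatrix, ← C_mul_X_eq_monomial, mul_comm]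

lemma restrictHyperplane_bind₁_extMatrix (g : Matrix (Fin d) (Fin d) ℝ)
    (P : MvPolynomial (Fin d ⊕ Unit) ℝ) :
    restrictHyperplane (bind₁ (extMatrix g).toMvPolynomial P) =
      bind₁ g.toMvPolynomial (restrictHyperplane P) := by
  suffices restrictHyperplane.comp (bind₁ (extMatrix g).toMvPolynomial) =
      (bind₁ g.toMvPolynomial).comp restrictHyperplane from DFunLike.congr_fun this P
  refine algHom_ext fun i => ?_
  cases i with
  | inl i =>
    rw [AlgHom.comp_apply, AlgHom.comp_apply, bind₁_X_right, extMatrix_toMvPolynomial_inl,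
      restrictHyperplane_rename]
    simp [restrictHyperplane]
  | inr =>
    rw [AlgHom.comp_apply, AlgHom.comp_apply, bind₁_X_right, extMatrix_toMvPolynomial_inr,
      restrictHyperplane_X_inr_mul]
    simp [restrictHyperplane]

lemma pderiv_inr_bind₁_extMatrix (g : Matrix (Fin d) (Fin d) ℝ)
    (P : MvPolynomial (Fin d ⊕ Unit) ℝ) :
    pderiv (Sum.inr ()) (bind₁ (extMatrix g).toMvPolynomial P) =
      g.det • bind₁ (extMatrix g).toMvPolynomial (pderiv (Sum.inr ()) P) := by
  simp [pderiv_bind₁, pderiv_toMvPolynomial, extMatrix, smul_eq_C_mul]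

lemma cauchyData_matrixAct_extMatrix {g : Matrix (Fin d) (Fin d) ℝ} (hg : IsUnit g.det)
    (P : MvPolynomial (Fin d ⊕ Unit) ℝ) :
    cauchyData (matrixAct (extMatrix g) P) =
      (matrixAct g (cauchyData P).1, g⁻¹.det • matrixAct g (cauchyData P).2) := by
  simp only [cauchyData_apply, matrixAct_apply, extMatrix_inv hg, pderiv_inr_bind₁_extMatrix,
    map_smul, restrictHyperplane_bind₁_extMatrix]

lemma matrixAct_extMatrix_eq_self_iff {g : Matrix (Fin d) (Fin d) ℝ}
    (hg : g ∈ Matrix.orthogonalGroup (Fin d) ℝ) {n : ℕ} {P : MvPolynomial (Fin d ⊕ Unit) ℝ}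
    (hP : P.IsHomogeneous n) (hΔ : laplacian P = 0) :
    matrixAct (extMatrix g) P = P ↔
      matrixAct g (cauchyData P).1 = (cauchyData P).1 ∧
        matrixAct g (cauchyData P).2 = g.det • (cauchyData P).2 := by
  have unit_det := isUnit_det_of_mem_orthogonalGroup hg
  have eq_iff_cauchyData_eq : matrixAct (extMatrix g) P = P ↔
      cauchyData (matrixAct (extMatrix g) P) = cauchyData P := by
    refine ⟨congrArg cauchyData, fun h => sub_eq_zero.1 ?_⟩
    refine eq_zero_of_cauchyData_eq_zero ((isHomogeneous_matrixAct _ hP).sub hP) ?_ ?_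
    · rw [map_sub, laplacian_matrixAct (extMatrix_mem_orthogonalGroup hg), hΔ, map_zero, sub_zero]
    · rw [map_sub, h, sub_self]
  rw [eq_iff_cauchyData_eq, cauchyData_matrixAct_extMatrix unit_det, Prod.ext_iff,
    Matrix.det_nonsing_inv, Ring.inverse_eq_inv', inv_smul_eq_iff₀ unit_det.ne_zero]

end ExtendedAction

section FiniteDimension

variable {K : Type*}

lemma finrank_map_of_forall_eq_zero {M N : Type*} [Ring K] [AddCommGroup M] [Module K M]
    [AddCommGroup N] [Module K N] (f : M →ₗ[K] N) {V : Submodule K M}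
    (hf : ∀ x ∈ V, f x = 0 → x = 0) : Module.finrank K (V.map f) = Module.finrank K V := by
  rw [← LinearMap.range_domRestrict]
  refine LinearMap.finrank_range_of_inj ((injective_iff_map_eq_zero _).2 fun x hx => ?_)
  exact Subtype.ext (hf x x.2 hx)

lemma finrank_submodule_prod {M N : Type*} [DivisionRing K] [AddCommGroup M] [Module K M]
    [AddCommGroup N] [Module K N] (V : Submodule K M) (W : Submodule K N)
    [Module.Finite K V] [Module.Finite K W] :
    Module.finrank K (V.prod W) = Module.finrank K V + Module.finrank K W := by
  have prodMap_injective : Function.Injective (V.subtype.prodMap W.subtype) :=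
    V.subtype_injective.prodMap W.subtype_injective
  rw [← Module.finrank_prod, ← LinearMap.finrank_range_of_inj prodMap_injective,
    LinearMap.range_prodMap, Submodule.range_subtype, Submodule.range_subtype]

lemma finite_of_le_homogeneousSubmodule {σ : Type*} [Finite σ] [Field K]
    {V : Submodule K (MvPolynomial σ K)} {n : ℕ} (hV : V ≤ homogeneousSubmodule σ K n) :
    Module.Finite K V :=
  have := Module.Finite.iff_fg.2 (homogeneousSubmodule_fg σ K n)
  Submodule.finiteDimensional_of_le hV

lemma finrank_homogeneousSubmodule_zero (σ K : Type*) [Field K] :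
    Module.finrank K (homogeneousSubmodule σ K 0) = 1 := by
  rw [homogeneousSubmodule_zero, Submodule.one_eq_span]
  exact finrank_span_singleton one_ne_zero

end FiniteDimension

section HilbertSeries

/-- The generating series `∑ₙ (dim Vₙ) tⁿ` of the dimensions of a sequence of subspaces. -/
def hilbertSeries {K M : Type*} [Semiring K] [AddCommMonoid M] [Module K M]
    (V : ℕ → Submodule K M) : PowerSeries ℤ :=
  PowerSeries.mk fun n => (Module.finrank K (V n) : ℤ)

lemma coeff_hilbertSeries {K M : Type*} [Semiring K] [AddCommMonoid M] [Module K M]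
    (V : ℕ → Submodule K M) (n : ℕ) :
    PowerSeries.coeff n (hilbertSeries V) = Module.finrank K (V n) :=
  PowerSeries.coeff_mk _ _

/-- The homogeneous polynomials `P` of degree `n` with `g · P = det g • P` for all `g ∈ Γ`. -/
def detInv {ι : Type} [Fintype ι] [DecidableEq ι] (Γ : Set (Matrix ι ι ℝ)) (n : ℕ) :
    Submodule ℝ (MvPolynomial ι ℝ) :=
  homogeneousSubmodule ι ℝ n ⊓ ⨅ g ∈ Γ, LinearMap.eqLocus (matrixAct g) (g.det • LinearMap.id)

variable {ι : Type} [Fintype ι] [DecidableEq ι] {Γ : Set (Matrix ι ι ℝ)} {n : ℕ}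
  {P : MvPolynomial ι ℝ}

lemma mem_polInv : P ∈ polInv Γ n ↔ P.IsHomogeneous n ∧ ∀ g ∈ Γ, matrixAct g P = P := by
  simp [polInv]

lemma mem_detInv :
    P ∈ detInv Γ n ↔ P.IsHomogeneous n ∧ ∀ g ∈ Γ, matrixAct g P = g.det • P := by
  simp [detInv]

lemma mem_harmInv :
    P ∈ harmInv Γ n ↔ P.IsHomogeneous n ∧ laplacian P = 0 ∧ ∀ g ∈ Γ, matrixAct g P = P := by
  simp [harmInv, and_assoc]

lemma matrixAct_eq_self_of_isHomogeneous_zero (g : Matrix ι ι ℝ) (hP : P.IsHomogeneous 0) :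
    matrixAct g P = P := by
  rw [← totalDegree_zero_iff_isHomogeneous, totalDegree_eq_zero_iff_eq_C] at hP
  rw [hP, matrixAct_apply, bind₁_C_right]

lemma finrank_polInv_zero (Γ : Set (Matrix ι ι ℝ)) : Module.finrank ℝ (polInv Γ 0) = 1 := by
  have polInv_eq : polInv Γ 0 = homogeneousSubmodule ι ℝ 0 := Submodule.ext fun P => by
    rw [mem_polInv, mem_homogeneousSubmodule, and_iff_left_of_imp]
    exact fun hP g _ => matrixAct_eq_self_of_isHomogeneous_zero g hP
  rw [polInv_eq, finrank_homogeneousSubmodule_zero]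

lemma finrank_harmInv_zero (Γ : Set (Matrix ι ι ℝ)) : Module.finrank ℝ (harmInv Γ 0) = 1 := by
  have harmInv_eq : harmInv Γ 0 = homogeneousSubmodule ι ℝ 0 := Submodule.ext fun P => by
    rw [mem_harmInv, mem_homogeneousSubmodule, and_iff_left_of_imp]
    exact fun hP => ⟨laplacian_eq_zero_of_isHomogeneous hP two_pos,
      fun g _ => matrixAct_eq_self_of_isHomogeneous_zero g hP⟩
  rw [harmInv_eq, finrank_homogeneousSubmodule_zero]

variable {d : ℕ} {Γ : Set (Matrix (Fin d) (Fin d) ℝ)}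

lemma map_cauchyData_harmInv (hΓ : Γ ⊆ Matrix.orthogonalGroup (Fin d) ℝ) (n : ℕ) :
    (harmInv (extMatrix '' Γ) (n + 1)).map cauchyData =
      (polInv Γ (n + 1)).prod (detInv Γ n) := by
  ext ⟨f, h⟩
  simp only [Submodule.mem_map, Submodule.mem_prod, mem_harmInv, mem_polInv, mem_detInv,
    Set.forall_mem_image]
  constructor
  · rintro ⟨P, ⟨hP, hΔ, hinv⟩, hdata⟩
    have invariant_data (g) (hg : g ∈ Γ) :=
      (matrixAct_extMatrix_eq_self_iff (hΓ hg) hP hΔ).1 (hinv hg)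
    rw [hdata] at invariant_data
    rw [cauchyData_apply, Prod.mk.injEq] at hdata
    exact ⟨⟨hdata.1 ▸ isHomogeneous_restrictHyperplane hP, fun g hg => (invariant_data g hg).1⟩,
      hdata.2 ▸ isHomogeneous_restrictHyperplane hP.pderiv, fun g hg => (invariant_data g hg).2⟩
  · rintro ⟨⟨hf, f_inv⟩, hh, h_inv⟩
    obtain ⟨P, hP, hΔ, hdata⟩ := exists_harmonic_of_cauchyData hf hh
    refine ⟨P, ⟨hP, hΔ, fun g hg => ?_⟩, hdata⟩
    rw [matrixAct_extMatrix_eq_self_iff (hΓ hg) hP hΔ, hdata]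
    exact ⟨f_inv g hg, h_inv g hg⟩

lemma finrank_harmInv_succ (hΓ : Γ ⊆ Matrix.orthogonalGroup (Fin d) ℝ) (n : ℕ) :
    Module.finrank ℝ (harmInv (extMatrix '' Γ) (n + 1)) =
      Module.finrank ℝ (polInv Γ (n + 1)) + Module.finrank ℝ (detInv Γ n) := by
  have : Module.Finite ℝ (polInv Γ (n + 1)) := finite_of_le_homogeneousSubmodule inf_le_left
  have : Module.Finite ℝ (detInv Γ n) := finite_of_le_homogeneousSubmodule inf_le_left
  rw [← finrank_submodule_prod, ← map_cauchyData_harmInv hΓ, finrank_map_of_forall_eq_zero]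
  intro P hP
  rw [mem_harmInv] at hP
  exact eq_zero_of_cauchyData_eq_zero hP.1 hP.2.1

lemma hilbertSeries_harmInv (hΓ : Γ ⊆ Matrix.orthogonalGroup (Fin d) ℝ) :
    hilbertSeries (harmInv (extMatrix '' Γ)) =
      hilbertSeries (polInv Γ) + PowerSeries.X * hilbertSeries (detInv Γ) := by
  ext (_ | n)
  · rw [map_add, PowerSeries.coeff_zero_X_mul, coeff_hilbertSeries, coeff_hilbertSeries,
      finrank_polInv_zero, finrank_harmInv_zero, add_zero]
  · rw [map_add, PowerSeries.coeff_succ_X_mul, coeff_hilbertSeries, coeff_hilbertSeries,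
      coeff_hilbertSeries, finrank_harmInv_succ hΓ, Nat.cast_add]

end HilbertSeries

section LinearForms

variable {ι K : Type*} [Fintype ι] [Field K]

/-- The linear form `x ↦ ∑ i, α i * x i`, as a polynomial. -/
def linForm : (ι → K) →ₗ[K] MvPolynomial ι K :=
  sumSMulX ∘ₗ (Finsupp.linearEquivFunOnFinite K K ι).symm

lemma linForm_apply (α : ι → K) : linForm α = ∑ i, C (α i) * X i := by
  simp [linForm, sumSMulX, Finsupp.linearCombination_apply, Finsupp.sum_fintype, smul_eq_C_mul]

lemma isHomogeneous_linForm (α : ι → K) : (linForm α).IsHomogeneous 1 := by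
  rw [linForm_apply]
  exact IsHomogeneous.sum _ _ _ fun i _ => isHomogeneous_C_mul_X (α i) i

lemma linForm_injective : Function.Injective (linForm : (ι → K) →ₗ[K] MvPolynomial ι K) := by
  intro α β h
  ext i
  simpa [linForm, coeff_sumSMulX] using congrArg (coeff (Finsupp.single i 1)) h

lemma linForm_ne_zero {α : ι → K} (hα : α ≠ 0) : linForm α ≠ 0 :=
  (map_ne_zero_iff _ linForm_injective).2 hα

lemma prime_linForm {α : ι → K} (hα : α ≠ 0) : Prime (linForm α) := by
  obtain ⟨i, hi⟩ := Function.ne_iff.1 hα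
  refine (irreducible_sumSMulX _ ⟨i, by simpa using hi⟩ fun r hr => ?_).prime
  exact isUnit_of_dvd_unit (hr i) (isUnit_iff_ne_zero.2 hi)

lemma exists_eq_smul_of_linForm_dvd {α β : ι → K} (hα : α ≠ 0) (h : linForm α ∣ linForm β) :
    ∃ t : K, β = t • α := by
  obtain ⟨q, hq⟩ := h
  have q_homogeneous : q.IsHomogeneous 0 :=
    isHomogeneous_of_mul_left (isHomogeneous_linForm α) (linForm_ne_zero hα)
      (hq ▸ isHomogeneous_linForm β)
  rw [← totalDegree_zero_iff_isHomogeneous, totalDegree_eq_zero_iff_eq_C] at q_homogeneous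
  refine ⟨coeff 0 q, linForm_injective ?_⟩
  rw [hq, map_smul, smul_eq_C_mul, ← q_homogeneous, mul_comm]

lemma linForm_single_one [DecidableEq ι] (i : ι) :
    linForm (Pi.single i 1) = (X i : MvPolynomial ι K) := by
  simp [linForm_apply, Pi.single_apply, apply_ite C]

lemma bind₁_toMvPolynomial_linForm (M : Matrix ι ι K) (α : ι → K) :
    bind₁ M.toMvPolynomial (linForm α) = linForm (Matrix.vecMul α M) := by
  simp only [linForm_apply, map_sum, map_mul, bind₁_C_right, bind₁_X_right, Matrix.toMvPolynomial,
    ← C_mul_X_eq_monomial, Matrix.vecMul, dotProduct, Finset.mul_sum, Finset.sum_mul, mul_assoc]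
  exact Finset.sum_comm

end LinearForms

section Reflections

/-- The matrix of the orthogonal reflection in the hyperplane orthogonal to `α`; it is the identity
when `α ⬝ᵥ α = 0`. -/
def reflectionMatrix {ι K : Type*} [Fintype ι] [DecidableEq ι] [Field K] (α : ι → K) :
    Matrix ι ι K :=
  1 - (2 / (α ⬝ᵥ α)) • Matrix.vecMulVec α α

variable {ι K : Type*} [Fintype ι] [DecidableEq ι] [Field K]

lemma reflectionMatrix_neg (α : ι → K) : reflectionMatrix (-α) = reflectionMatrix α := by
  simp [reflectionMatrix]

lemma reflectionMatrix_transpose (α : ι → K) :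
    (reflectionMatrix α).transpose = reflectionMatrix α := by
  simp [reflectionMatrix, Matrix.transpose_vecMulVec]

lemma reflectionMatrix_mul_self (α : ι → K) : reflectionMatrix α * reflectionMatrix α = 1 := by
  have coefficient : 2 / (α ⬝ᵥ α) * (2 / (α ⬝ᵥ α) * (α ⬝ᵥ α)) = 2 * (2 / (α ⬝ᵥ α)) := by
    obtain h | h := eq_or_ne (α ⬝ᵥ α) 0
    · simp [h]
    · field_simp
  simp only [reflectionMatrix, sub_mul, mul_sub, one_mul, mul_one, Matrix.smul_mul,
    Matrix.mul_smul, Matrix.vecMulVec_mul_vecMulVec, Matrix.vecMulVec_smul, smul_smul, coefficient,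
    two_mul, add_smul]
  abel

lemma reflectionMatrix_inv (α : ι → K) : (reflectionMatrix α)⁻¹ = reflectionMatrix α :=
  Matrix.inv_eq_right_inv (reflectionMatrix_mul_self α)

lemma reflectionMatrix_mem_orthogonalGroup (α : ι → ℝ) :
    reflectionMatrix α ∈ Matrix.orthogonalGroup ι ℝ := by
  rw [Matrix.mem_orthogonalGroup_iff, reflectionMatrix_transpose, reflectionMatrix_mul_self]

lemma det_reflectionMatrix {α : ι → K} (hα : α ⬝ᵥ α ≠ 0) : (reflectionMatrix α).det = -1 := by
  have rank_one_update : reflectionMatrix α =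
      1 + Matrix.replicateCol Unit (-(2 / (α ⬝ᵥ α)) • α) * Matrix.replicateRow Unit α := by
    rw [← Matrix.vecMulVec_eq, Matrix.smul_vecMulVec, neg_smul, ← sub_eq_add_neg,
      reflectionMatrix]
  rw [rank_one_update, Matrix.det_one_add_replicateCol_mul_replicateRow, dotProduct_smul,
    smul_eq_mul, neg_mul, div_mul_cancel₀ _ hα]
  norm_num

variable {d : ℕ}

lemma reflectionMatrix_mulVec (α x : Fin d → ℝ) :
    (reflectionMatrix α).mulVec x = rootReflection α x := by
  rw [reflectionMatrix, Matrix.sub_mulVec, Matrix.one_mulVec, Matrix.smul_mulVec,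
    Matrix.vecMulVec_mulVec, op_smul_eq_smul, smul_smul, dotProduct_comm α x,
    div_mul_eq_mul_div]
  rfl

lemma rootReflection_rootReflection (α x : Fin d → ℝ) :
    rootReflection α (rootReflection α x) = x := by
  rw [← reflectionMatrix_mulVec, ← reflectionMatrix_mulVec, Matrix.mulVec_mulVec,
    reflectionMatrix_mul_self, Matrix.one_mulVec]

lemma rootReflection_self {α : Fin d → ℝ} (hα : α ≠ 0) : rootReflection α α = -α := by
  have : dotP α α ≠ 0 := dotProduct_self_eq_zero.not.2 hα
  rw [rootReflection, mul_div_cancel_right₀ _ this, two_smul]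
  abel

lemma matrixAct_reflectionMatrix_linForm (α β : Fin d → ℝ) :
    matrixAct (reflectionMatrix α) (linForm β) = linForm (rootReflection α β) := by
  rw [matrixAct_apply, reflectionMatrix_inv, bind₁_toMvPolynomial_linForm,
    ← Matrix.mulVec_transpose, reflectionMatrix_transpose, reflectionMatrix_mulVec]

lemma linForm_dvd_matrixAct_reflectionMatrix_sub (α : Fin d → ℝ) (P : MvPolynomial (Fin d) ℝ) :
    linForm α ∣ matrixAct (reflectionMatrix α) P - P := by
  rw [matrixAct_apply]
  refine dvd_algHom_apply_sub (fun i => ?_) P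
  rw [← matrixAct_apply, ← linForm_single_one, matrixAct_reflectionMatrix_linForm, ← map_sub,
    rootReflection, sub_sub_cancel_left, ← neg_smul, map_smul]
  exact dvd_smul_of_dvd _ dvd_rfl

lemma linForm_dvd_of_matrixAct_eq_neg {α : Fin d → ℝ} {P : MvPolynomial (Fin d) ℝ}
    (h : matrixAct (reflectionMatrix α) P = -P) : linForm α ∣ P := by
  have dvd_sub := linForm_dvd_matrixAct_reflectionMatrix_sub α P
  have : P = (-1 / 2 : ℝ) • (-P - P) := by module
  rw [this, ← h]
  exact dvd_smul_of_dvd _ dvd_sub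

end Reflections

section RootSystems

variable {d : ℕ}

/-- A reduced root system of `ℝ^d` in the general sense: the ambient space need not be spanned, and
the Cartan numbers need not be integers. -/
structure IsReducedRootSystem (R : Finset (Fin d → ℝ)) : Prop where
  zero_notMem : (0 : Fin d → ℝ) ∉ R
  rootReflection_mem : ∀ α ∈ R, ∀ β ∈ R, rootReflection α β ∈ R
  multiples_eq : ∀ α ∈ R, {β | β ∈ R ∧ ∃ t : ℝ, β = t • α} = ({α, -α} : Set (Fin d → ℝ))

open Classical in
/-- The roots that are positive for the lexicographic order of `ℝ^d`, which is a total order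
compatible with addition. -/
def posRoots (R : Finset (Fin d → ℝ)) : Finset (Fin d → ℝ) :=
  {α ∈ R | 0 < toLex α}

/-- The product of the linear forms of the positive roots. -/
def rootProduct (R : Finset (Fin d → ℝ)) : MvPolynomial (Fin d) ℝ :=
  ∏ β ∈ posRoots R, linForm β

lemma toLex_neg_pos_iff {α : Fin d → ℝ} (hα : α ≠ 0) : 0 < toLex (-α) ↔ ¬ 0 < toLex α := by
  have toLex_ne_zero : toLex α ≠ 0 := by simpa using hα
  rw [toLex_neg, Left.neg_pos_iff]
  exact ⟨fun h => h.not_gt, toLex_ne_zero.lt_or_gt.resolve_right⟩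

lemma mem_posRoots {R : Finset (Fin d → ℝ)} {α : Fin d → ℝ} :
    α ∈ posRoots R ↔ α ∈ R ∧ 0 < toLex α := by
  simp [posRoots]

lemma isHomogeneous_rootProduct (R : Finset (Fin d → ℝ)) :
    (rootProduct R).IsHomogeneous (posRoots R).card := by
  simpa [rootProduct] using
    IsHomogeneous.prod (posRoots R) linForm (fun _ => 1) fun β _ => isHomogeneous_linForm β

namespace IsReducedRootSystem

variable {R : Finset (Fin d → ℝ)} {α β : Fin d → ℝ}

lemma ne_zero (hR : IsReducedRootSystem R) (hα : α ∈ R) : α ≠ 0 :=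
  ne_of_mem_of_not_mem hα hR.zero_notMem

lemma neg_mem (hR : IsReducedRootSystem R) (hα : α ∈ R) : -α ∈ R :=
  ((hR.multiples_eq α hα).ge (Or.inr rfl)).1

lemma mem_posRoots_or_neg_mem (hR : IsReducedRootSystem R) (hα : α ∈ R) :
    α ∈ posRoots R ∨ -α ∈ posRoots R := by
  rw [mem_posRoots, mem_posRoots, toLex_neg_pos_iff (hR.ne_zero hα)]
  simpa [hα, hR.neg_mem hα] using em (0 < toLex α)

open Classical in
lemma filter_not_pos (hR : IsReducedRootSystem R) :
    {α ∈ R | ¬ 0 < toLex α} = (posRoots R).map (Equiv.neg _).toEmbedding := by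
  ext α
  simp only [Finset.mem_filter, Finset.mem_map_equiv, Equiv.neg_symm, Equiv.neg_apply,
    mem_posRoots]
  constructor
  · exact fun ⟨hα, hneg⟩ => ⟨hR.neg_mem hα, (toLex_neg_pos_iff (hR.ne_zero hα)).2 hneg⟩
  · rintro ⟨hα, hpos⟩
    have hα' : α ∈ R := neg_neg α ▸ hR.neg_mem hα
    exact ⟨hα', (toLex_neg_pos_iff (hR.ne_zero hα')).1 hpos⟩

lemma card_eq (hR : IsReducedRootSystem R) : R.card = 2 * (posRoots R).card := by
  classical
  rw [← Finset.card_filter_add_card_filter_not (fun α => 0 < toLex α), hR.filter_not_pos,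
    Finset.card_map, two_mul, posRoots]

lemma prod_linForm (hR : IsReducedRootSystem R) :
    ∏ β ∈ R, linForm β = (-1) ^ (posRoots R).card * rootProduct R ^ 2 := by
  classical
  rw [← Finset.prod_filter_mul_prod_filter_not R (fun α => 0 < toLex α), hR.filter_not_pos,
    Finset.prod_map]
  simp only [Equiv.coe_toEmbedding, Equiv.neg_apply, map_neg, Finset.prod_neg, rootProduct,
    posRoots]
  ring

lemma rootProduct_ne_zero (hR : IsReducedRootSystem R) : rootProduct R ≠ 0 :=
  Finset.prod_ne_zero_iff.2 fun _ hβ => linForm_ne_zero (hR.ne_zero (mem_posRoots.1 hβ).1)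

lemma not_linForm_dvd (hR : IsReducedRootSystem R) (hα : α ∈ posRoots R) (hβ : β ∈ posRoots R)
    (hne : β ≠ α) : ¬ linForm α ∣ linForm β := by
  intro hdvd
  rw [mem_posRoots] at hα hβ
  have β_mem : β ∈ ({α, -α} : Set (Fin d → ℝ)) := hR.multiples_eq α hα.1 ▸
    ⟨hβ.1, exists_eq_smul_of_linForm_dvd (hR.ne_zero hα.1) hdvd⟩
  obtain rfl := β_mem.resolve_left hne
  exact (toLex_neg_pos_iff (hR.ne_zero hα.1)).1 hβ.2 hα.2

lemma matrixAct_rootProduct_sq (hR : IsReducedRootSystem R) (hα : α ∈ R) :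
    matrixAct (reflectionMatrix α) (rootProduct R) ^ 2 = rootProduct R ^ 2 := by
  have prod_invariant :
      bind₁ (reflectionMatrix α)⁻¹.toMvPolynomial (∏ β ∈ R, linForm β) = ∏ β ∈ R, linForm β := by
    simp only [map_prod, ← matrixAct_apply, matrixAct_reflectionMatrix_linForm]
    exact Finset.prod_nbij' (rootReflection α) (rootReflection α)
      (hR.rootReflection_mem α hα) (hR.rootReflection_mem α hα)
      (fun β _ => rootReflection_rootReflection α β)
      (fun β _ => rootReflection_rootReflection α β) fun _ _ => rfl
  rw [hR.prod_linForm, map_mul, map_pow, map_pow, map_neg, map_one] at prod_invariant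
  rw [matrixAct_apply]
  exact mul_left_cancel₀ (pow_ne_zero _ (neg_ne_zero.2 one_ne_zero)) prod_invariant

lemma matrixAct_rootProduct_of_mem_posRoots (hR : IsReducedRootSystem R)
    (hα : α ∈ posRoots R) :
    matrixAct (reflectionMatrix α) (rootProduct R) = -rootProduct R := by
  classical
  have hαR := (mem_posRoots.1 hα).1
  have eq_or_eq_neg := sq_eq_sq_iff_eq_or_eq_neg.1 (hR.matrixAct_rootProduct_sq hαR)
  -- If `s_α` fixed the product, it would negate the product of the other forms, which would then
  -- be divisible by `linForm α`.
  refine eq_or_eq_neg.resolve_left fun fixed => ?_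
  rw [rootProduct, ← Finset.mul_prod_erase _ _ hα, matrixAct_apply_mul,
    matrixAct_reflectionMatrix_linForm, rootReflection_self (hR.ne_zero hαR), map_neg, neg_mul,
    ← mul_neg] at fixed
  have rest_negated := mul_left_cancel₀ (linForm_ne_zero (hR.ne_zero hαR)) fixed
  obtain ⟨β, hβ, hdvd⟩ := (prime_linForm (hR.ne_zero hαR)).exists_mem_finset_dvd
    (linForm_dvd_of_matrixAct_eq_neg (neg_eq_iff_eq_neg.1 rest_negated))
  rw [Finset.mem_erase] at hβ
  exact hR.not_linForm_dvd hα hβ.2 hβ.1 hdvd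

lemma matrixAct_rootProduct (hR : IsReducedRootSystem R) (hα : α ∈ R) :
    matrixAct (reflectionMatrix α) (rootProduct R) = -rootProduct R := by
  obtain hpos | hneg := hR.mem_posRoots_or_neg_mem hα
  · exact hR.matrixAct_rootProduct_of_mem_posRoots hpos
  · rw [← reflectionMatrix_neg]
    exact hR.matrixAct_rootProduct_of_mem_posRoots hneg

lemma rootProduct_dvd (hR : IsReducedRootSystem R) {P : MvPolynomial (Fin d) ℝ}
    (hP : ∀ α ∈ R, matrixAct (reflectionMatrix α) P = -P) : rootProduct R ∣ P := by
  refine Finset.prod_dvd_of_isRelPrime (fun α hα β hβ hne => ?_) fun α hα =>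
    linForm_dvd_of_matrixAct_eq_neg (hP α (mem_posRoots.1 hα).1)
  have irreducible_α := (prime_linForm (hR.ne_zero (mem_posRoots.1 hα).1)).irreducible
  exact irreducible_α.isRelPrime_iff_not_dvd.2 (hR.not_linForm_dvd hα hβ hne.symm)

end IsReducedRootSystem

end RootSystems

section WeylGroup

variable {d : ℕ} {R : Finset (Fin d → ℝ)}

lemma extWeylSet_eq_image (R : Finset (Fin d → ℝ)) : extWeylSet R = extMatrix '' weylSet R := by
  ext m
  simp only [extWeylSet, weylSet, Set.mem_image, Set.mem_ofPred_eq]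
  exact ⟨fun ⟨g, hg, hm⟩ => ⟨g, ⟨g, hg, rfl⟩, hm.symm⟩, fun ⟨_, ⟨g, hg, hx⟩, hm⟩ =>
    ⟨g, hg, hx ▸ hm.symm⟩⟩

lemma reflectionMatrix_mem_weylSet {α : Fin d → ℝ} (hα : α ∈ R) :
    reflectionMatrix α ∈ weylSet R :=
  ⟨⟨reflectionMatrix α, reflectionMatrix α, reflectionMatrix_mul_self α,
    reflectionMatrix_mul_self α⟩,
    Subgroup.subset_closure ⟨α, hα, reflectionMatrix_mulVec α⟩, rfl⟩

lemma weylSet_induction {p : Matrix (Fin d) (Fin d) ℝ → Prop}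
    (reflection : ∀ α ∈ R, p (reflectionMatrix α)) (one : p 1)
    (mul : ∀ g h, p g → p h → p (g * h)) {g : Matrix (Fin d) (Fin d) ℝ} (hg : g ∈ weylSet R) :
    p g := by
  obtain ⟨u, hu, rfl⟩ := hg
  have eq_reflectionMatrix {v : (Matrix (Fin d) (Fin d) ℝ)ˣ} {α : Fin d → ℝ}
      (hv : ∀ x, (v : Matrix (Fin d) (Fin d) ℝ).mulVec x = rootReflection α x) :
      (v : Matrix (Fin d) (Fin d) ℝ) = reflectionMatrix α :=
    Matrix.mulVec_injective (funext fun x => by rw [hv, reflectionMatrix_mulVec])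
  induction hu using Subgroup.closure_induction'' with
  | mem v hv =>
    obtain ⟨α, hα, hv⟩ := hv
    exact eq_reflectionMatrix hv ▸ reflection α hα
  | inv_mem v hv =>
    obtain ⟨α, hα, hv⟩ := hv
    rw [Matrix.coe_units_inv, eq_reflectionMatrix hv, reflectionMatrix_inv]
    exact reflection α hα
  | one => exact one
  | mul v w _ _ hv hw => exact mul v w hv hw

lemma weylSet_subset_orthogonalGroup (R : Finset (Fin d → ℝ)) :
    weylSet R ⊆ Matrix.orthogonalGroup (Fin d) ℝ := fun _ hg =>
  weylSet_induction (p := (· ∈ Matrix.orthogonalGroup (Fin d) ℝ))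
    (fun α _ => reflectionMatrix_mem_orthogonalGroup α) (one_mem _) (fun _ _ => mul_mem) hg

lemma mem_detInv_weylSet (hzero : 0 ∉ R) {n : ℕ} {P : MvPolynomial (Fin d) ℝ} :
    P ∈ detInv (weylSet R) n ↔
      P.IsHomogeneous n ∧ ∀ α ∈ R, matrixAct (reflectionMatrix α) P = -P := by
  have det_smul {α : Fin d → ℝ} (hα : α ∈ R) : (reflectionMatrix α).det • P = -P := by
    have α_ne_zero : α ⬝ᵥ α ≠ 0 :=
      dotProduct_self_eq_zero.not.2 (ne_of_mem_of_not_mem hα hzero)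
    rw [det_reflectionMatrix α_ne_zero, neg_one_smul]
  rw [mem_detInv]
  refine and_congr_right fun _ => ⟨fun h α hα => ?_, fun h g hg => ?_⟩
  · rw [h _ (reflectionMatrix_mem_weylSet hα), det_smul hα]
  · refine weylSet_induction (p := fun g => matrixAct g P = g.det • P) (fun α hα => ?_) ?_
      (fun g g' hg hg' => ?_) hg
    · rw [h α hα, det_smul hα]
    · rw [matrixAct_one, Matrix.det_one, one_smul, Module.End.one_apply]
    · rw [matrixAct_mul, Module.End.mul_apply, hg', map_smul, hg, smul_smul, Matrix.det_mul,
        mul_comm]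

namespace IsReducedRootSystem

lemma rootProduct_mem_detInv (hR : IsReducedRootSystem R) :
    rootProduct R ∈ detInv (weylSet R) (posRoots R).card :=
  (mem_detInv_weylSet hR.zero_notMem).2
    ⟨isHomogeneous_rootProduct R, fun _ => hR.matrixAct_rootProduct⟩

lemma rootProduct_dvd_of_mem_detInv (hR : IsReducedRootSystem R) {n : ℕ}
    {P : MvPolynomial (Fin d) ℝ} (hP : P ∈ detInv (weylSet R) n) : rootProduct R ∣ P :=
  hR.rootProduct_dvd ((mem_detInv_weylSet hR.zero_notMem).1 hP).2

lemma detInv_eq_bot (hR : IsReducedRootSystem R) {n : ℕ} (hn : n < (posRoots R).card) :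
    detInv (weylSet R) n = ⊥ :=
  (Submodule.eq_bot_iff _).2 fun _ hP => eq_zero_of_dvd_of_isHomogeneous_of_lt
    (isHomogeneous_rootProduct R) (mem_detInv.1 hP).1 (hR.rootProduct_dvd_of_mem_detInv hP) hn

lemma detInv_add (hR : IsReducedRootSystem R) (m : ℕ) :
    detInv (weylSet R) ((posRoots R).card + m) =
      (polInv (weylSet R) m).map (LinearMap.mulLeft ℝ (rootProduct R)) := by
  have equivariant := (mem_detInv.1 hR.rootProduct_mem_detInv).2
  ext P
  simp only [Submodule.mem_map, LinearMap.mulLeft_apply]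
  constructor
  · intro hP
    obtain ⟨Q, rfl⟩ := hR.rootProduct_dvd_of_mem_detInv hP
    rw [mem_detInv] at hP
    refine ⟨Q, mem_polInv.2 ⟨isHomogeneous_of_mul_left (isHomogeneous_rootProduct R)
      hR.rootProduct_ne_zero hP.1, fun g hg => ?_⟩, rfl⟩
    have det_ne_zero :=
      (isUnit_det_of_mem_orthogonalGroup (weylSet_subset_orthogonalGroup R hg)).ne_zero
    have action := hP.2 g hg
    rw [matrixAct_apply_mul, equivariant g hg, smul_mul_assoc] at action
    exact mul_left_cancel₀ hR.rootProduct_ne_zero (smul_right_injective _ det_ne_zero action)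
  · rintro ⟨Q, hQ, rfl⟩
    rw [mem_polInv] at hQ
    refine mem_detInv.2 ⟨(isHomogeneous_rootProduct R).mul hQ.1, fun g hg => ?_⟩
    rw [matrixAct_apply_mul, equivariant g hg, hQ.2 g hg, smul_mul_assoc]

lemma hilbertSeries_detInv (hR : IsReducedRootSystem R) :
    hilbertSeries (detInv (weylSet R)) =
      PowerSeries.X ^ (R.card / 2) * hilbertSeries (polInv (weylSet R)) := by
  have half_card : R.card / 2 = (posRoots R).card := by have := hR.card_eq; omega
  ext n
  rw [half_card, PowerSeries.coeff_X_pow_mul']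
  split_ifs with hn
  · obtain ⟨m, rfl⟩ := Nat.exists_eq_add_of_le hn
    rw [coeff_hilbertSeries, coeff_hilbertSeries, hR.detInv_add, Nat.add_sub_cancel_left,
      finrank_map_of_forall_eq_zero]
    exact fun Q _ hQ => (mul_eq_zero.1 hQ).resolve_left hR.rootProduct_ne_zero
  · rw [coeff_hilbertSeries, hR.detInv_eq_bot (not_le.1 hn), finrank_bot, Nat.cast_zero]

end IsReducedRootSystem

end WeylGroup

theorem statement1_general {d : ℕ} {R : Finset (Fin d → ℝ)} (hR : IsReducedRootSystem R) :
    hilbertSeries (harmInv (extWeylSet R)) =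
      (1 + PowerSeries.X ^ (1 + R.card / 2)) * hilbertSeries (polInv (weylSet R)) := by
  rw [extWeylSet_eq_image, hilbertSeries_harmInv (weylSet_subset_orthogonalGroup R),
    hR.hilbertSeries_detInv]
  ring

/-- For a reduced crystallographic root system `R` spanning `ℝ^d`, with `W(R)` acting on
`ℝ^{d+1} = ℝ^d ⊕ ℝ` by `w · (v, x) = (w v, ε(w) x)`, the generating series of the dimensions of
the `W(R)`-invariant harmonic polynomials on `ℝ^{d+1}` is `(1 + t^{1 + |R|/2}) P_R(t)`. -/
theorem statement1 {d : ℕ} (hd : 1 ≤ d) (R : Finset (Fin d → ℝ))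
    (hzero : (0 : Fin d → ℝ) ∉ R)
    (hspan : Submodule.span ℝ (R : Set (Fin d → ℝ)) = ⊤)
    (hcrys : ∀ α ∈ R, ∀ β ∈ R, ∃ k : ℤ, 2 * dotP β α / dotP α α = (k : ℝ))
    (hrefl : ∀ α ∈ R, ∀ β ∈ R, rootReflection α β ∈ R)
    (hred : ∀ α ∈ R, {β | β ∈ R ∧ ∃ t : ℝ, β = t • α} = ({α, -α} : Set (Fin d → ℝ))) :
    (PowerSeries.mk fun n => (Module.finrank ℝ ↥(harmInv (extWeylSet R) n) : ℤ)) =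
      (1 + PowerSeries.X ^ (1 + R.card / 2)) *
        PowerSeries.mk fun n => (Module.finrank ℝ ↥(polInv (weylSet R) n) : ℤ) := by
  exact statement1_general ⟨hzero, hrefl, hred⟩
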